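/- If the matching uncovered set is nonempty, then the social choice rule that selects the alphabetically smallest candidate in the matching uncovered set (MatchingUncovered) has distortion at most 3 on that profile: for the selected candidate A, every metric d consistent with the profile, and every candidate B, Σ_{v ∈ V} d(A,v) ≤ 3 · Σ_{v ∈ V} d(B,v). -/

import Mathlib

/-- `d` is a metric: nonnegative, symmetric and satisfying the triangle inequality. -/
def IsMetric {α : Type*} (d : α → α → ℝ) : Prop :=
  (∀ x y, 0 ≤ d x y) ∧ (∀ x y, d x y = d y x) ∧ (∀ x y z, d x z ≤ d x y + d y z)

/-- `d` on the entities `C ⊕ V` is consistent with the voting profile `pref`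
(where `pref v X Y` means voter `v` strictly prefers candidate `X` to `Y`):
a more-preferred candidate is at weakly smaller distance. -/
def Consistent {C V : Type*} (pref : V → C → C → Prop) (d : C ⊕ V → C ⊕ V → ℝ) : Prop :=
  ∀ (v : V) (X Y : C), pref v X Y → d (Sum.inl X) (Sum.inr v) ≤ d (Sum.inl Y) (Sum.inr v)

/-- Edge of the bipartite graph `G(A,B)` between left copy `v` and right copy `v'`
of the voters: `P_v(B) ∩ Q_{v'}(A) ≠ ∅`, i.e. some candidate `Z` is liked at least as
much as `B` by `v` and at most as much as `A` by `v'`. -/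
def GEdge {C V : Type*} (pref : V → C → C → Prop) (A B : C) (v v' : V) : Prop :=
  ∃ Z : C, (Z = B ∨ pref v Z B) ∧ (Z = A ∨ pref v' A Z)

/-- The bipartite graph `G(A,B)` (both sides a copy of the voter set) has a perfect
matching. -/
def HasPM {C V : Type*} (pref : V → C → C → Prop) (A B : C) : Prop :=
  ∃ M : V ≃ V, ∀ v : V, GEdge pref A B v (M v)

/-- The weight `w(X,Y)` of the weighted tournament graph: the fraction of voters
preferring `X` to `Y`. -/
noncomputable def wgt {C V : Type*} [Fintype V] (pref : V → C → C → Prop) (X Y : C) : ℝ :=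
  (Nat.card {v : V // pref v X Y} : ℝ) / (Fintype.card V : ℝ)

/-!
If `v` is matched to `v'` in `G(A,B)` through a candidate `Z`, then consistency gives
`d(A,v') ≤ d(Z,v')` and `d(Z,v) ≤ d(B,v)`, and the walk `Z, v, B, v'` yields
`d(A,v') ≤ d(Z,v) + d(v,B) + d(B,v') ≤ 2 d(B,v) + d(B,v')`. Along a perfect matching `v` and `v'`
each run over every voter exactly once, so summing produces the factor `2 + 1 = 3`.
-/

theorem IsMetric.dist_le_dist_add_dist_add_dist {α : Type*} {d : α → α → ℝ} (hd : IsMetric d)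
    (x y z w : α) : d x w ≤ d x y + d z y + d z w := by
  obtain ⟨-, hsymm, htri⟩ := hd
  calc d x w ≤ d x y + d y w := htri x y w
    _ ≤ d x y + (d y z + d z w) := by gcongr; exact htri y z w
    _ = d x y + d z y + d z w := by rw [hsymm y z, add_assoc]

section

variable {C V : Type*} {pref : V → C → C → Prop} {d : C ⊕ V → C ⊕ V → ℝ} {A B : C} {v v' : V}

theorem Consistent.dist_le_of_eq_or_pref (hcons : Consistent pref d) (h : A = B ∨ pref v A B) :
    d (Sum.inl A) (Sum.inr v) ≤ d (Sum.inl B) (Sum.inr v) :=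
  h.elim (fun hAB => hAB ▸ le_rfl) (hcons v A B)

theorem GEdge.dist_le (hedge : GEdge pref A B v v') (hd : IsMetric d)
    (hcons : Consistent pref d) :
    d (Sum.inl A) (Sum.inr v') ≤
      2 * d (Sum.inl B) (Sum.inr v) + d (Sum.inl B) (Sum.inr v') := by
  obtain ⟨Z, hZB, hAZ⟩ := hedge
  calc d (Sum.inl A) (Sum.inr v')
      ≤ d (Sum.inl Z) (Sum.inr v') := hcons.dist_le_of_eq_or_pref (hAZ.imp_left Eq.symm)
    _ ≤ d (Sum.inl Z) (Sum.inr v) + d (Sum.inl B) (Sum.inr v) + d (Sum.inl B) (Sum.inr v') :=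
        hd.dist_le_dist_add_dist_add_dist ..
    _ ≤ d (Sum.inl B) (Sum.inr v) + d (Sum.inl B) (Sum.inr v) + d (Sum.inl B) (Sum.inr v') := by
        gcongr
        exact hcons.dist_le_of_eq_or_pref hZB
    _ = 2 * d (Sum.inl B) (Sum.inr v) + d (Sum.inl B) (Sum.inr v') := by rw [two_mul]

theorem HasPM.refl (pref : V → C → C → Prop) (A : C) : HasPM pref A A :=
  ⟨Equiv.refl V, fun _ => ⟨A, Or.inl rfl, Or.inl rfl⟩⟩

theorem stmt_19_general [Fintype V] (hAB : HasPM pref A B) (hd : IsMetric d)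
    (hcons : Consistent pref d) :
    ∑ v : V, d (Sum.inl A) (Sum.inr v) ≤ 3 * ∑ v : V, d (Sum.inl B) (Sum.inr v) := by
  obtain ⟨M, hM⟩ := hAB
  calc ∑ v, d (Sum.inl A) (Sum.inr v)
      = ∑ v, d (Sum.inl A) (Sum.inr (M v)) :=
        (M.sum_comp fun v => d (Sum.inl A) (Sum.inr v)).symm
    _ ≤ ∑ v, (2 * d (Sum.inl B) (Sum.inr v) + d (Sum.inl B) (Sum.inr (M v))) :=
        Finset.sum_le_sum fun v _ => (hM v).dist_le hd hcons
    _ = 2 * ∑ v, d (Sum.inl B) (Sum.inr v) + ∑ v, d (Sum.inl B) (Sum.inr v) := by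
        rw [Finset.sum_add_distrib, ← Finset.mul_sum,
          M.sum_comp fun v => d (Sum.inl B) (Sum.inr v)]
    _ = 3 * ∑ v, d (Sum.inl B) (Sum.inr v) := by ring

end

/-- Corollary 4.5: if the matching uncovered set is nonempty, then the rule
`MatchingUncovered`, which selects the alphabetically smallest candidate `A` of the
matching uncovered set (smallest in the linear order on candidates), has distortion at
most `3` on that profile: for every metric `d` consistent with the profile and every
candidate `B`, `∑_v d(A,v) ≤ 3 ∑_v d(B,v)`. -/
theorem stmt_19 {C V : Type*} [Fintype C] [Fintype V] [LinearOrder C]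
    (pref : V → C → C → Prop) (hpref : ∀ v, IsStrictTotalOrder C (pref v))
    (A : C)
    (hA : ∀ B : C, B ≠ A → HasPM pref A B)
    (hmin : ∀ A' : C, (∀ B : C, B ≠ A' → HasPM pref A' B) → A ≤ A')
    (d : C ⊕ V → C ⊕ V → ℝ) (hd : IsMetric d) (hcons : Consistent pref d)
    (B : C) :
    ∑ v : V, d (Sum.inl A) (Sum.inr v) ≤ 3 * ∑ v : V, d (Sum.inl B) (Sum.inr v) := by
  obtain rfl | hBA := eq_or_ne B A
  exacts [stmt_19_general (HasPM.refl pref B) hd hcons, stmt_19_general (hA B hBA) hd hcons]
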